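/- Server-step contraction under a single-block update (eq. (asdr_eq5_2b)). Let η > 0 and suppose for all i and for j ∈ {k, k+1}: y_i^j = x_i^j + η∇f_i(x_i^j), x̂_i^j = 2x_i^j − y_i^j, x̄^j = prox_{ηg}((1/n)Σ_{i=1}^n x̂_i^j), and x̂_i^{k+1} = x̂_i^k for every i ≠ i_k (only block i_k changes). Then ‖x̄^{k+1} − x̄^k‖² ≤ (2(1+η²L²)/n²)‖x_{i_k}^{k+1} − x_{i_k}^k‖². -/

import Mathlib

section ProxHelpers
variable {E : Type*} [NormedAddCommGroup E] [InnerProductSpace ℝ E]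

/-- One-sided variational inequality for a proximal point, with step `t`. -/
lemma prox_aux (g : E → ℝ) (hg : ConvexOn ℝ Set.univ g) (c : ℝ) (u p q : E)
    (hp : IsMinOn (fun w => g w + c * ‖w - u‖ ^ 2) Set.univ p)
    (t : ℝ) (ht : 0 < t) (ht1 : t ≤ 1) :
    g p - g q ≤ c * (2 * inner ℝ (p - u) (q - p) + t * ‖q - p‖ ^ 2) := by
  have h1 := hp (Set.mem_univ ((1 - t) • p + t • q))
  simp only [Set.mem_setOf_eq] at h1
  have h2 := hg.2 (Set.mem_univ p) (Set.mem_univ q) (by linarith : 0 ≤ 1 - t) ht.le (by ring)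
  have e : (1 - t) • p + t • q - u = (p - u) + t • (q - p) := by module
  rw [e, norm_add_sq_real (p - u) (t • (q - p)), norm_smul, inner_smul_right, mul_pow,
    Real.norm_eq_abs, sq_abs] at h1
  simp only [smul_eq_mul] at h2
  have h3 : t * (g p - g q) ≤
      t * (c * (2 * inner ℝ (p - u) (q - p) + t * ‖q - p‖ ^ 2)) := by
    nlinarith
  exact le_of_mul_le_mul_left h3 ht

/-- Proximal maps of convex functions are nonexpansive. -/
lemma prox_nonexp (g : E → ℝ) (hg : ConvexOn ℝ Set.univ g) (c : ℝ) (hc : 0 < c) (u v p q : E)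
    (hp : IsMinOn (fun w => g w + c * ‖w - u‖ ^ 2) Set.univ p)
    (hq : IsMinOn (fun w => g w + c * ‖w - v‖ ^ 2) Set.univ q) :
    ‖q - p‖ ≤ ‖v - u‖ := by
  have key : ∀ t : ℝ, 0 < t → t ≤ 1 →
      ‖q - p‖ ^ 2 ≤ ‖q - p‖ * ‖v - u‖ + t * ‖q - p‖ ^ 2 := by
    intro t ht ht1
    have h1 := prox_aux g hg c u p q hp t ht ht1
    have h2 := prox_aux g hg c v q p hq t ht ht1
    rw [norm_sub_rev p q] at h2
    have e : inner ℝ (p - u) (q - p) + inner ℝ (q - v) (p - q)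
        = inner ℝ (v - u) (q - p) - ‖q - p‖ ^ 2 := by
      rw [← real_inner_self_eq_norm_sq, ← inner_sub_left, ← neg_sub q p, inner_neg_right,
        ← sub_eq_add_neg, ← inner_sub_left]
      congr 1
      abel
    have h3 := real_inner_le_norm (v - u) (q - p)
    have h4 : 0 ≤ c * (2 * (inner ℝ (p - u) (q - p) + inner ℝ (q - v) (p - q))
        + 2 * (t * ‖q - p‖ ^ 2)) := by
      linarith
    have h5 := nonneg_of_mul_nonneg_right h4 hc
    rw [e] at h5
    linarith
  by_contra! h
  have hv := norm_nonneg (v - u)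
  have hD : 0 < ‖q - p‖ := by linarith
  have h1 := key ((‖q - p‖ - ‖v - u‖) / (2 * ‖q - p‖)) (by apply div_pos <;> linarith)
    (by rw [div_le_one (by linarith)]; linarith)
  have h2 : (‖q - p‖ - ‖v - u‖) / (2 * ‖q - p‖) * ‖q - p‖ ^ 2
      = (‖q - p‖ - ‖v - u‖) * ‖q - p‖ / 2 := by
    field_simp
  rw [h2] at h1
  nlinarith

end ProxHelpers

/-- **Server-step contraction under a single-block update (eq. (asdr_eq5_2b)).**
If at two consecutive iterations `y_i = x_i + η∇f_i(x_i)`, `x̂_i = 2x_i − y_i`,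
`x̄ = prox_{ηg}((1/n)Σᵢ x̂_i)`, and only the block `i₀` changes, then
`‖x̄' − x̄‖² ≤ (2(1+η²L²)/n²)‖x'_{i₀} − x_{i₀}‖²`. -/
theorem asyncFedDR_server_step_contraction {pdim n : ℕ} (hn : 0 < n)
    (f : Fin n → EuclideanSpace ℝ (Fin pdim) → ℝ) (L : ℝ) (hL : 0 < L)
    (hdiff : ∀ i, Differentiable ℝ (f i))
    (hlip : ∀ i u v, ‖gradient (f i) u - gradient (f i) v‖ ≤ L * ‖u - v‖)
    (g : EuclideanSpace ℝ (Fin pdim) → ℝ)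
    (hgconv : ConvexOn ℝ Set.univ g) (hglsc : LowerSemicontinuous g)
    (η : ℝ) (hη : 0 < η)
    (proxg : EuclideanSpace ℝ (Fin pdim) → EuclideanSpace ℝ (Fin pdim))
    (hproxg : ∀ u, IsMinOn (fun w => g w + (1 / (2 * η)) * ‖w - u‖ ^ 2) Set.univ (proxg u))
    (hproxg_unique : ∀ u w,
      IsMinOn (fun w' => g w' + (1 / (2 * η)) * ‖w' - u‖ ^ 2) Set.univ w → w = proxg u)
    (x x' y y' xhat xhat' : Fin n → EuclideanSpace ℝ (Fin pdim))
    (xbar xbar' : EuclideanSpace ℝ (Fin pdim)) (i₀ : Fin n)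
    (hy : ∀ i, y i = x i + η • gradient (f i) (x i))
    (hy' : ∀ i, y' i = x' i + η • gradient (f i) (x' i))
    (hxhat : ∀ i, xhat i = (2 : ℝ) • x i - y i)
    (hxhat' : ∀ i, xhat' i = (2 : ℝ) • x' i - y' i)
    (hxbar : xbar = proxg ((n : ℝ)⁻¹ • ∑ i, xhat i))
    (hxbar' : xbar' = proxg ((n : ℝ)⁻¹ • ∑ i, xhat' i))
    (honeblock : ∀ i, i ≠ i₀ → xhat' i = xhat i) :
    ‖xbar' - xbar‖ ^ 2 ≤ (2 * (1 + η ^ 2 * L ^ 2) / (n : ℝ) ^ 2) * ‖x' i₀ - x i₀‖ ^ 2 := by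
  have hN : (0 : ℝ) < n := by exact_mod_cast hn
  have hne : ‖xbar' - xbar‖ ≤
      ‖(n : ℝ)⁻¹ • ∑ i, xhat' i - (n : ℝ)⁻¹ • ∑ i, xhat i‖ := by
    rw [hxbar, hxbar']
    exact prox_nonexp g hgconv (1 / (2 * η)) (by positivity) _ _ _ _ (hproxg _) (hproxg _)
  have hsum : ∑ i, xhat' i - ∑ i, xhat i = xhat' i₀ - xhat i₀ := by
    rw [← Finset.sum_sub_distrib]
    refine Finset.sum_eq_single i₀ (fun i _ hi => ?_) (fun h => absurd (Finset.mem_univ _) h)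
    rw [honeblock i hi, sub_self]
  rw [← smul_sub, hsum, norm_smul, norm_inv, Real.norm_of_nonneg hN.le] at hne
  have e : xhat' i₀ - xhat i₀ =
      (x' i₀ - x i₀) - η • (gradient (f i₀) (x' i₀) - gradient (f i₀) (x i₀)) := by
    rw [hxhat, hxhat', hy, hy']
    module
  have h1 := norm_sub_le (x' i₀ - x i₀)
    (η • (gradient (f i₀) (x' i₀) - gradient (f i₀) (x i₀)))
  rw [← e, norm_smul, Real.norm_of_nonneg hη.le] at h1
  have h2 := mul_le_mul_of_nonneg_left (hlip i₀ (x' i₀) (x i₀)) hη.le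
  have h3 : ‖xhat' i₀ - xhat i₀‖ ≤ (1 + η * L) * ‖x' i₀ - x i₀‖ := by linarith
  calc ‖xbar' - xbar‖ ^ 2 ≤ ((n : ℝ)⁻¹ * ((1 + η * L) * ‖x' i₀ - x i₀‖)) ^ 2 := by
        refine pow_le_pow_left₀ (norm_nonneg _) (hne.trans ?_) 2
        exact mul_le_mul_of_nonneg_left h3 (by positivity)
    _ = ((1 + η * L) ^ 2 / (n : ℝ) ^ 2) * ‖x' i₀ - x i₀‖ ^ 2 := by
        field_simp
    _ ≤ _ := by
        gcongr
        nlinarith [sq_nonneg (1 - η * L)]
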